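/- Let G be a connected simple graph on n vertices. For every acyclic orientation α of G, the toric equivalence class of α (its equivalence class under single flips of sources and sinks) is the disjoint union of exactly n double-flip equivalence classes; equivalently, the number of double-flip equivalence classes contained in {β : β torically equivalent to α} is exactly n. -/

import Mathlib

/-- `o` is an orientation of the simple graph `G`: it directs each edge of `G` in
exactly one direction, and directs nothing else. -/
def IsOrientation {V : Type*} (G : SimpleGraph V) (o : V → V → Prop) : Prop :=
  (∀ a b, o a b → G.Adj a b) ∧ ∀ a b, G.Adj a b → (o a b ↔ ¬ o b a)

/-- `DoubleFlip G o o'` : the orientation `o'` is obtained from `o` by a double flip,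
i.e., there are a source `u` of `o` (a vertex of in-degree `0`) and a sink `v` of `o`
(a vertex of out-degree `0`), not adjacent in `G`, such that `o'` reverses exactly the
edges of `o` incident to `u` or `v`. -/
def DoubleFlip {V : Type*} (G : SimpleGraph V) (o o' : V → V → Prop) : Prop :=
  ∃ u v : V, u ≠ v ∧ ¬ G.Adj u v ∧ (∀ w, ¬ o w u) ∧ (∀ w, ¬ o v w) ∧
    ∀ a b, o' a b ↔
      (((a = u ∨ b = u ∨ a = v ∨ b = v) ∧ o b a) ∨
        (¬ (a = u ∨ b = u ∨ a = v ∨ b = v) ∧ o a b))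

/-- `SingleFlip o o'` : the orientation `o'` is obtained from `o` by flipping a single
source or sink `u`, i.e., reversing exactly the edges of `o` incident to `u`. -/
def SingleFlip {V : Type*} (o o' : V → V → Prop) : Prop :=
  ∃ u : V, ((∀ w, ¬ o w u) ∨ (∀ w, ¬ o u w)) ∧
    ∀ a b, o' a b ↔
      (((a = u ∨ b = u) ∧ o b a) ∨ (¬ (a = u ∨ b = u) ∧ o a b))

/-!
Record a sequence of flips by the function `k : V → ℤ` counting, for every vertex, its flips as a
source minus its flips as a sink. Along an edge `a → b` the flips of `a` and `b` alternate,
beginning with `a`, so `k a - k b ∈ {0, 1}`, and `k` determines the resulting orientation. On a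
connected graph `k` is in turn determined by the resulting orientation up to an additive constant,
so `∑ v, k v` modulo `n` is an invariant of orientations in the toric class. A double flip preserves
it, and a single source flip raises it by `1`, so all `n` residues occur.

It remains to join two orientations with the same residue by double flips. After subtracting a
constant, the relative flip count `k` has sum `0`. By acyclicity its maximum is attained at a source
and its minimum at a sink. If `k ≠ 0` these values are at least `1` and at most `-1`, hence the two
vertices are not adjacent, and double-flipping them decreases `∑ v, |k v|`.
-/

section Relations

open Relation

variable {V : Type*} {o p : V → V → Prop} {u v : V} {k l : V → ℤ}

/-- The vertex `u` has in-degree `0` in the orientation `o`. -/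
def IsSource (o : V → V → Prop) (u : V) : Prop := ∀ w, ¬ o w u

/-- The vertex `v` has out-degree `0` in the orientation `o`. -/
def IsSink (o : V → V → Prop) (v : V) : Prop := ∀ w, ¬ o v w

/-- The relation `o` has no directed cycle. -/
def IsAcyclicRel (o : V → V → Prop) : Prop := ∀ v, ¬ TransGen o v v

/-- `k` is the net flip count of a flip sequence starting at `o`: each vertex `v` is flipped `k v`
more times as a source than as a sink. The condition expresses that along an edge `a → b` the flips
of `a` and `b` alternate, beginning with `a`. -/
def IsFlipCount (o : V → V → Prop) (k : V → ℤ) : Prop :=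
  ∀ ⦃a b⦄, o a b → k b ≤ k a ∧ k a ≤ k b + 1

/-- The orientation reached from `o` by flips with net flip count `k`; an edge `a → b` of `o` is
reversed when `k a = k b + 1`. -/
def flipBy (o : V → V → Prop) (k : V → ℤ) (a b : V) : Prop :=
  (o a b ∧ k a = k b) ∨ (o b a ∧ k b = k a + 1)

theorem IsFlipCount.zero : IsFlipCount o 0 := fun _ _ _ => by simp

theorem IsFlipCount.sub_const (hk : IsFlipCount o k) (c : ℤ) :
    IsFlipCount o (k - Function.const V c) := fun a b hab => by
  simpa [sub_add_eq_add_sub] using hk hab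

theorem IsFlipCount.swap_neg (hk : IsFlipCount o k) : IsFlipCount (Function.swap o) (-k) :=
  fun a b hab => by
    have := hk hab
    simp only [Pi.neg_apply]
    omega

theorem isFlipCount_flipBy_iff (hk : IsFlipCount o k) :
    IsFlipCount (flipBy o k) l ↔ IsFlipCount o (k + l) := by
  simp only [IsFlipCount, flipBy, Pi.add_apply] at *
  constructor <;> grind

theorem flipBy_zero : flipBy o 0 = o := by
  ext a b
  simp [flipBy]

theorem flipBy_sub_const (o : V → V → Prop) (k : V → ℤ) (c : ℤ) :
    flipBy o (k - Function.const V c) = flipBy o k := by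
  ext a b
  simp [flipBy, sub_add_eq_add_sub]

theorem flipBy_flipBy (hk : IsFlipCount o k) (hl : IsFlipCount (flipBy o k) l) :
    flipBy (flipBy o k) l = flipBy o (k + l) := by
  ext a b
  have hab := @hk a b
  have hba := @hk b a
  have hlab := @hl a b
  have hlba := @hl b a
  simp only [flipBy, Pi.add_apply] at *
  grind

theorem IsAcyclicRel.swap (ho : IsAcyclicRel o) : IsAcyclicRel (Function.swap o) := fun v hv =>
  ho v (by rwa [transGen_swap] at hv)

theorem lt_or_transGen_of_transGen_flipBy {a b : V} (h : TransGen (flipBy o k) a b) :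
    k a < k b ∨ k a = k b ∧ TransGen o a b := by
  induction h with
  | single h =>
    rcases h with ⟨h, hk⟩ | ⟨-, hk⟩
    · exact .inr ⟨hk, .single h⟩
    · omega
  | tail _ h ih =>
    rcases h with ⟨h, hk⟩ | ⟨-, hk⟩
    · exact ih.imp (fun ih => ih.trans_eq hk) fun ih => ⟨ih.1.trans hk, ih.2.tail h⟩
    · omega

theorem isAcyclicRel_flipBy (ho : IsAcyclicRel o) (k : V → ℤ) : IsAcyclicRel (flipBy o k) :=
  fun v hv => (lt_or_transGen_of_transGen_flipBy hv).elim (lt_irrefl _) fun h => ho v h.2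

theorem IsAcyclicRel.exists_minimal [Finite V] (ho : IsAcyclicRel o) {s : Set V}
    (hs : s.Nonempty) : ∃ u ∈ s, ∀ w ∈ s, ¬ o w u := by
  have : Std.Irrefl (TransGen o) := ⟨ho⟩
  obtain ⟨u, hu, hmin⟩ := (Finite.wellFounded_of_trans_of_irrefl (TransGen o)).has_min s hs
  exact ⟨u, hu, fun w hw hwu => hmin w hw (.single hwu)⟩

theorem IsFlipCount.exists_isSource_forall_le [Finite V] [Nonempty V] (hk : IsFlipCount o k)
    (ho : IsAcyclicRel o) : ∃ u, IsSource o u ∧ ∀ w, k w ≤ k u := by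
  obtain ⟨u, hu, hmin⟩ := ho.exists_minimal (s := {u | ∀ w, k w ≤ k u}) (Finite.exists_max k)
  exact ⟨u, fun w hwu => hmin w (fun x => (hu x).trans (hk hwu).1) hwu, hu⟩

theorem IsFlipCount.exists_isSource_pos [Fintype V] (hk : IsFlipCount o k) (ho : IsAcyclicRel o)
    (hsum : ∑ v, k v = 0) (hne : k ≠ 0) : ∃ u, IsSource o u ∧ 0 < k u := by
  obtain ⟨x, hx⟩ := Function.ne_iff.1 hne
  have : Nonempty V := ⟨x⟩
  obtain ⟨y, -, hy⟩ :=
    Finset.exists_pos_of_sum_zero_of_exists_nonzero k hsum ⟨x, Finset.mem_univ x, hx⟩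
  obtain ⟨u, hu, hmax⟩ := hk.exists_isSource_forall_le ho
  exact ⟨u, hu, hy.trans_le (hmax y)⟩

theorem IsFlipCount.exists_isSink_neg [Fintype V] (hk : IsFlipCount o k) (ho : IsAcyclicRel o)
    (hsum : ∑ v, k v = 0) (hne : k ≠ 0) : ∃ v, IsSink o v ∧ k v < 0 := by
  obtain ⟨v, hv, hpos⟩ := hk.swap_neg.exists_isSource_pos ho.swap (by simp [hsum])
    (neg_ne_zero.2 hne)
  exact ⟨v, hv, neg_pos.1 hpos⟩

section Flips

variable [DecidableEq V]

theorem IsSource.isFlipCount_single (hu : IsSource o u) : IsFlipCount o (Pi.single u 1) :=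
  fun a b hab => by
    have hb : b ≠ u := fun h => hu a (h ▸ hab)
    simp only [Pi.single_apply]
    grind

theorem IsSink.isFlipCount_neg_single (hv : IsSink o v) : IsFlipCount o (-Pi.single v 1) :=
  IsFlipCount.swap_neg (o := Function.swap o) (IsSource.isFlipCount_single hv)

theorem IsSource.flipBy_single (hu : IsSource o u) (a b : V) :
    flipBy o (Pi.single u 1) a b ↔
      ((a = u ∨ b = u) ∧ o b a) ∨ (¬ (a = u ∨ b = u) ∧ o a b) := by
  have ha := hu a
  have hb := hu b
  simp only [flipBy, Pi.single_apply]
  grind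

theorem IsSink.flipBy_neg_single (hv : IsSink o v) (a b : V) :
    flipBy o (-Pi.single v 1) a b ↔
      ((a = v ∨ b = v) ∧ o b a) ∨ (¬ (a = v ∨ b = v) ∧ o a b) := by
  have ha := hv a
  have hb := hv b
  simp only [flipBy, Pi.neg_apply, Pi.single_apply]
  grind

theorem singleFlip_iff : SingleFlip o p ↔
    ∃ u, IsSource o u ∧ p = flipBy o (Pi.single u 1) ∨
      IsSink o u ∧ p = flipBy o (-Pi.single u 1) := by
  refine exists_congr fun u => or_and_right.trans (or_congr ?_ ?_)
  · refine and_congr_right fun hu => ?_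
    simp only [funext_iff, eq_iff_iff, IsSource.flipBy_single hu]
  · refine and_congr_right fun hu => ?_
    simp only [funext_iff, eq_iff_iff, IsSink.flipBy_neg_single hu]

theorem isFlipCount_single_sub_single (hu : IsSource o u) (hv : IsSink o v) (huv : ¬ o u v) :
    IsFlipCount o (Pi.single u 1 - Pi.single v 1) := fun a b hab => by
  have hb : b ≠ u := fun h => hu a (h ▸ hab)
  have ha : a ≠ v := fun h => hv b (h ▸ hab)
  have : ¬ (a = u ∧ b = v) := fun h => huv (h.1 ▸ h.2 ▸ hab)
  simp only [Pi.sub_apply, Pi.single_apply]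
  grind

theorem flipBy_single_sub_single (hu : IsSource o u) (hv : IsSink o v) (huv : ¬ o u v)
    (a b : V) :
    flipBy o (Pi.single u 1 - Pi.single v 1) a b ↔
      ((a = u ∨ b = u ∨ a = v ∨ b = v) ∧ o b a) ∨
        (¬ (a = u ∨ b = u ∨ a = v ∨ b = v) ∧ o a b) := by
  have hua := hu a
  have hub := hu b
  have hva := hv a
  have hvb := hv b
  simp only [flipBy, Pi.sub_apply, Pi.single_apply]
  grind

end Flips

theorem SingleFlip.exists_isFlipCount (h : SingleFlip o p) :
    ∃ k, IsFlipCount o k ∧ p = flipBy o k := by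
  classical
  obtain ⟨u, ⟨hu, hp⟩ | ⟨hu, hp⟩⟩ := singleFlip_iff.1 h
  · exact ⟨_, hu.isFlipCount_single, hp⟩
  · exact ⟨_, hu.isFlipCount_neg_single, hp⟩

theorem exists_isFlipCount_of_reflTransGen_singleFlip (h : ReflTransGen SingleFlip o p) :
    ∃ k, IsFlipCount o k ∧ p = flipBy o k := by
  induction h with
  | refl => exact ⟨0, .zero, flipBy_zero.symm⟩
  | tail _ hflip ih =>
    obtain ⟨k, hk, rfl⟩ := ih
    obtain ⟨l, hl, rfl⟩ := hflip.exists_isFlipCount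
    exact ⟨k + l, (isFlipCount_flipBy_iff hk).1 hl, flipBy_flipBy hk hl⟩

theorem IsAcyclicRel.exists_isFlipCount_sum_eq [Fintype V] [Nonempty V] (ho : IsAcyclicRel o)
    (j : ℕ) :
    ∃ k, IsFlipCount o k ∧ ReflTransGen SingleFlip o (flipBy o k) ∧ ∑ v, k v = j := by
  classical
  induction j with
  | zero => exact ⟨0, .zero, by rw [flipBy_zero], by simp⟩
  | succ j ih =>
    obtain ⟨k, hk, hreach, hsum⟩ := ih
    obtain ⟨u, hu, -⟩ := IsFlipCount.zero.exists_isSource_forall_le (isAcyclicRel_flipBy ho k)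
    have hl := hu.isFlipCount_single
    refine ⟨k + Pi.single u 1, (isFlipCount_flipBy_iff hk).1 hl, hreach.tail ?_, ?_⟩
    · exact singleFlip_iff.2 ⟨u, .inl ⟨hu, (flipBy_flipBy hk hl).symm⟩⟩
    · simp [Finset.sum_add_distrib, hsum]

end Relations

section Orientations

open Relation

variable {V : Type*} {G : SimpleGraph V} {o p : V → V → Prop} {k l : V → ℤ}

theorem isOrientation_flipBy (ho : IsOrientation G o) (hk : IsFlipCount o k) :
    IsOrientation G (flipBy o k) := by
  refine ⟨fun a b hab => ?_, fun a b hab => ?_⟩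
  · exact hab.elim (fun h => ho.1 a b h.1) fun h => (ho.1 b a h.1).symm
  · have hor := ho.2 a b hab
    have hka := @hk a b
    have hkb := @hk b a
    simp only [flipBy]
    grind

namespace IsOrientation

theorem apply_le_apply_add_one (ho : IsOrientation G o) (hk : IsFlipCount o k) {a b : V}
    (hab : G.Adj a b) : k a ≤ k b + 1 := by
  by_cases h : o a b
  · exact (hk h).2
  · have hba : o b a := (ho.2 b a hab.symm).2 h
    linarith [(hk hba).1]

theorem exists_eq_const_of_flipBy_eq (ho : IsOrientation G o) (hG : G.Connected)
    (h : flipBy o k = o) : ∃ c, k = Function.const V c := by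
  have eq_of_edge : ∀ a b, o a b → k a = k b := fun a b hab => by
    have hba : ¬ o b a := (ho.2 a b (ho.1 a b hab)).1 hab
    have hflip : flipBy o k a b := by rwa [h]
    exact hflip.elim And.right fun h => absurd h.1 hba
  have eq_of_adj : ∀ a b, G.Adj a b → k a = k b := fun a b hab => by
    by_cases hoab : o a b
    · exact eq_of_edge a b hoab
    · exact (eq_of_edge b a ((ho.2 b a hab.symm).2 hoab)).symm
  obtain ⟨r⟩ := hG.nonempty
  refine ⟨k r, funext fun v => ?_⟩
  obtain ⟨w⟩ := hG.preconnected v r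
  induction w with
  | nil => rfl
  | cons hadj _ ih => exact (eq_of_adj _ _ hadj).trans ih

theorem doubleFlip_iff [DecidableEq V] (ho : IsOrientation G o) : DoubleFlip G o p ↔
    ∃ u v, u ≠ v ∧ ¬ G.Adj u v ∧ IsSource o u ∧ IsSink o v ∧
      p = flipBy o (Pi.single u 1 - Pi.single v 1) := by
  refine exists_congr fun u => exists_congr fun v => and_congr_right fun _ =>
    and_congr_right fun hadj => and_congr_right fun hu => and_congr_right fun hv => ?_
  have huv : ¬ o u v := fun h => hadj (ho.1 u v h)
  simp only [funext_iff, eq_iff_iff, flipBy_single_sub_single hu hv huv]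

variable [Fintype V]

theorem exists_isFlipCount_of_doubleFlip (ho : IsOrientation G o) (h : DoubleFlip G o p) :
    ∃ k, IsFlipCount o k ∧ ∑ v, k v = 0 ∧ p = flipBy o k := by
  classical
  obtain ⟨u, v, -, hadj, hu, hv, hp⟩ := ho.doubleFlip_iff.1 h
  exact ⟨_, isFlipCount_single_sub_single hu hv fun huv => hadj (ho.1 u v huv), by simp, hp⟩

theorem exists_isFlipCount_of_reflTransGen_doubleFlip (ho : IsOrientation G o)
    (h : ReflTransGen (DoubleFlip G) o p) :
    ∃ k, IsFlipCount o k ∧ ∑ v, k v = 0 ∧ p = flipBy o k := by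
  induction h with
  | refl => exact ⟨0, .zero, by simp, flipBy_zero.symm⟩
  | tail _ hflip ih =>
    obtain ⟨k, hk, hksum, rfl⟩ := ih
    obtain ⟨l, hl, hlsum, rfl⟩ :=
      (isOrientation_flipBy ho hk).exists_isFlipCount_of_doubleFlip hflip
    exact ⟨k + l, (isFlipCount_flipBy_iff hk).1 hl, by simp [Finset.sum_add_distrib, hksum, hlsum],
      flipBy_flipBy hk hl⟩

theorem exists_doubleFlip_sum_natAbs_lt (ho : IsOrientation G o) (hac : IsAcyclicRel o)
    (hk : IsFlipCount o k) (hsum : ∑ v, k v = 0) (hne : k ≠ 0) :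
    ∃ d, IsFlipCount o d ∧ ∑ v, d v = 0 ∧ DoubleFlip G o (flipBy o d) ∧
      ∑ v, ((k - d) v).natAbs < ∑ v, (k v).natAbs := by
  classical
  obtain ⟨u, hu, hku⟩ := hk.exists_isSource_pos hac hsum hne
  obtain ⟨v, hv, hkv⟩ := hk.exists_isSink_neg hac hsum hne
  have huv : u ≠ v := fun h => lt_asymm hku (h ▸ hkv)
  have hadj : ¬ G.Adj u v := fun h => by linarith [ho.apply_le_apply_add_one hk h]
  refine ⟨Pi.single u 1 - Pi.single v 1,
    isFlipCount_single_sub_single hu hv fun h => hadj (ho.1 u v h), by simp,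
    ho.doubleFlip_iff.2 ⟨u, v, huv, hadj, hu, hv, rfl⟩,
    Finset.sum_lt_sum (fun w _ => ?_) ⟨u, Finset.mem_univ u, ?_⟩⟩
  · simp only [Pi.sub_apply, Pi.single_apply]
    grind
  · simp only [Pi.sub_apply, Pi.single_apply]
    grind

theorem reflTransGen_doubleFlip_flipBy (ho : IsOrientation G o) (hac : IsAcyclicRel o)
    (hk : IsFlipCount o k) (hsum : ∑ v, k v = 0) :
    ReflTransGen (DoubleFlip G) o (flipBy o k) := by
  induction hN : ∑ v, (k v).natAbs using Nat.strong_induction_on generalizing o k with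
  | _ N ih =>
    by_cases hne : k = 0
    · rw [hne, flipBy_zero]
    obtain ⟨d, hd, hdsum, hflip, hlt⟩ := ho.exists_doubleFlip_sum_natAbs_lt hac hk hsum hne
    have hkd : IsFlipCount (flipBy o d) (k - d) := by
      rwa [isFlipCount_flipBy_iff hd, add_sub_cancel]
    have hrest := ih _ (hN ▸ hlt) (isOrientation_flipBy ho hd) (isAcyclicRel_flipBy hac d) hkd
      (by simp [Finset.sum_sub_distrib, hsum, hdsum]) rfl
    rw [flipBy_flipBy hd hkd, add_sub_cancel] at hrest
    exact .head hflip hrest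

theorem reflTransGen_doubleFlip_flipBy_iff (ho : IsOrientation G o) (hG : G.Connected)
    (hac : IsAcyclicRel o) (hk : IsFlipCount o k) :
    ReflTransGen (DoubleFlip G) o (flipBy o k) ↔ (Fintype.card V : ℤ) ∣ ∑ v, k v := by
  constructor
  · intro h
    obtain ⟨l, hl, hlsum, heq⟩ := ho.exists_isFlipCount_of_reflTransGen_doubleFlip h
    have hkl : IsFlipCount (flipBy o l) (k - l) := by
      rwa [isFlipCount_flipBy_iff hl, add_sub_cancel]
    have hfix : flipBy (flipBy o l) (k - l) = flipBy o l := by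
      rw [flipBy_flipBy hl hkl, add_sub_cancel, heq]
    obtain ⟨c, hc⟩ := (isOrientation_flipBy ho hl).exists_eq_const_of_flipBy_eq hG hfix
    refine ⟨c, ?_⟩
    simp [sub_eq_iff_eq_add.1 hc, Finset.sum_add_distrib, hlsum]
  · rintro ⟨c, hc⟩
    rw [← flipBy_sub_const o k c]
    exact ho.reflTransGen_doubleFlip_flipBy hac (hk.sub_const c) (by simp [hc])

theorem reflTransGen_doubleFlip_flipBy_flipBy_iff (ho : IsOrientation G o) (hG : G.Connected)
    (hac : IsAcyclicRel o) (hk : IsFlipCount o k) (hl : IsFlipCount o l) :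
    ReflTransGen (DoubleFlip G) (flipBy o k) (flipBy o l) ↔
      ∑ v, k v ≡ ∑ v, l v [ZMOD Fintype.card V] := by
  have hlk : IsFlipCount (flipBy o k) (l - k) := by
    rwa [isFlipCount_flipBy_iff hk, add_sub_cancel]
  have h := (isOrientation_flipBy ho hk).reflTransGen_doubleFlip_flipBy_iff hG
    (isAcyclicRel_flipBy hac k) hlk
  rw [flipBy_flipBy hk hlk, add_sub_cancel] at h
  simp only [h, Int.modEq_iff_dvd, Pi.sub_apply, Finset.sum_sub_distrib]

theorem setOf_reflTransGen_doubleFlip_eq_iff (ho : IsOrientation G o) (hG : G.Connected)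
    (hac : IsAcyclicRel o) (hk : IsFlipCount o k) (hl : IsFlipCount o l) :
    {q | ReflTransGen (DoubleFlip G) (flipBy o k) q} =
        {q | ReflTransGen (DoubleFlip G) (flipBy o l) q} ↔
      ∑ v, k v ≡ ∑ v, l v [ZMOD Fintype.card V] := by
  have hkl_iff := ho.reflTransGen_doubleFlip_flipBy_flipBy_iff hG hac hk hl
  have hlk_iff := ho.reflTransGen_doubleFlip_flipBy_flipBy_iff hG hac hl hk
  refine ⟨fun h => hkl_iff.1 (h.symm.subset ReflTransGen.refl), fun hmod => Set.ext fun q => ?_⟩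
  exact ⟨(hlk_iff.2 hmod.symm).trans, (hkl_iff.2 hmod).trans⟩

end IsOrientation

end Orientations

/-- Defant–Kravitz, Corollary 4.7: for a connected graph `G` on `n` vertices and an
acyclic orientation `o` of `G`, the toric equivalence class of `o` (its class under
single flips) is the disjoint union of exactly `n` double-flip equivalence classes:
the number of distinct double-flip classes of orientations torically equivalent to
`o` is `n = |V(G)|`. -/
theorem stmt12 {V : Type*} [Fintype V] (G : SimpleGraph V) (hG : G.Connected)
    (o : V → V → Prop) (ho : IsOrientation G o)
    (hacyc : ∀ v, ¬ Relation.TransGen o v v) :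
    Set.ncard {C : Set (V → V → Prop) |
        ∃ p, Relation.ReflTransGen SingleFlip o p ∧
          C = {q | Relation.ReflTransGen (DoubleFlip G) p q}} = Fintype.card V := by
  have := hG.nonempty
  choose K hK hreach hsum using IsAcyclicRel.exists_isFlipCount_sum_eq hacyc
  refine Set.ncard_eq_of_bijective
    (fun j _ => {q | Relation.ReflTransGen (DoubleFlip G) (flipBy o (K j)) q}) ?_ ?_ ?_
  · rintro _ ⟨p, hp, rfl⟩
    obtain ⟨k, hk, rfl⟩ := exists_isFlipCount_of_reflTransGen_singleFlip hp
    have hcard : (0 : ℤ) < Fintype.card V := by exact_mod_cast Fintype.card_pos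
    obtain ⟨j, hj, hjk⟩ := Int.existsUnique_equiv_nat (∑ v, k v) hcard
    refine ⟨j, by exact_mod_cast hj, ?_⟩
    rwa [ho.setOf_reflTransGen_doubleFlip_eq_iff hG hacyc (hK j) hk, hsum]
  · exact fun j _ => ⟨_, hreach j, rfl⟩
  · intro i j hi hj hij
    rw [ho.setOf_reflTransGen_doubleFlip_eq_iff hG hacyc (hK i) (hK j), hsum, hsum,
      Int.natCast_modEq_iff] at hij
    exact hij.eq_of_lt_of_lt hi hj
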